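/- Let n ≥ 4 and let G be a connected simple graph on n vertices with domination number 2 whose spectral radius is minimum among all connected simple graphs on n vertices with domination number 2. Then G is isomorphic to H_{⌊n/2⌋,⌈n/2⌉}. -/

import Mathlib

open SimpleGraph

/-- Adjacency matrix of a simple graph over ℝ. -/
noncomputable def adjMat {V : Type*} (G : SimpleGraph V) : Matrix V V ℝ :=
  Matrix.of fun i j => @ite ℝ (G.Adj i j) (Classical.propDecidable _) 1 0

/-- Spectral radius: the largest eigenvalue (supremum of the real spectrum)
of the adjacency matrix. -/
noncomputable def specRad {V : Type*} [Fintype V] [DecidableEq V]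
    (G : SimpleGraph V) : ℝ :=
  sSup (spectrum ℝ (adjMat G))

/-- `D` is a dominating set of `G`. -/
def IsDomSet {V : Type*} (G : SimpleGraph V) (D : Finset V) : Prop :=
  ∀ v ∉ D, ∃ u ∈ D, G.Adj u v

/-- The domination number of `G`. -/
noncomputable def domNum {V : Type*} [Fintype V] (G : SimpleGraph V) : ℕ :=
  sInf {k | ∃ D : Finset V, IsDomSet G D ∧ D.card = k}

/-- The tree `H_{⌊n/2⌋,⌈n/2⌉}`: the path v1 v2 v3 v4 (vertices `Sum.inl 0, …, Sum.inl 3`)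
with `⌊n/2⌋ - 2` pendant edges at v1 and `⌈n/2⌉ - 2` pendant edges at v4. -/
def Hgraph (n : ℕ) : SimpleGraph (Fin 4 ⊕ (Fin (n / 2 - 2) ⊕ Fin ((n + 1) / 2 - 2))) :=
  SimpleGraph.fromRel (fun x y =>
    (x = Sum.inl 0 ∧ y = Sum.inl 1) ∨
    (x = Sum.inl 1 ∧ y = Sum.inl 2) ∨
    (x = Sum.inl 2 ∧ y = Sum.inl 3) ∨
    (∃ j : Fin (n / 2 - 2), x = Sum.inl 0 ∧ y = Sum.inr (Sum.inl j)) ∨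
    (∃ j : Fin ((n + 1) / 2 - 2), x = Sum.inl 3 ∧ y = Sum.inr (Sum.inr j)))

open Matrix in
theorem adjMat_mulVec {V : Type*} [Fintype V] (G : SimpleGraph V) [DecidableRel G.Adj]
    (f : V → ℝ) (i : V) : (adjMat G *ᵥ f) i = ∑ j, if G.Adj i j then f j else 0 := by
  simp only [Matrix.mulVec, dotProduct, adjMat, Matrix.of_apply]
  refine Finset.sum_congr rfl fun j _ => ?_
  by_cases h : G.Adj i j <;> simp [h]

theorem adjMat_herm {V : Type*} (G : SimpleGraph V) : (adjMat G).IsHermitian := by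
  ext i j
  have h := G.adj_comm i j
  by_cases h' : G.Adj j i <;> simp [adjMat, h, h']

open Matrix in
theorem adjMat_symm_dot {V : Type*} [Fintype V] (G : SimpleGraph V) (x y : V → ℝ) :
    x ⬝ᵥ (adjMat G *ᵥ y) = y ⬝ᵥ (adjMat G *ᵥ x) := by
  have h : (adjMat G)ᵀ = adjMat G := by
    have := adjMat_herm G
    simpa [Matrix.IsHermitian, Matrix.conjTranspose_eq_transpose_of_trivial] using this
  rw [Matrix.dotProduct_mulVec, ← Matrix.mulVec_transpose, h, dotProduct_comm]

theorem cross_edge {V : Type*} {G : SimpleGraph V} (hG : G.Connected) (S : Set V) {a b : V}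
    (ha : a ∈ S) (hb : b ∉ S) : ∃ y z, y ∈ S ∧ z ∉ S ∧ G.Adj y z := by
  obtain ⟨p⟩ := hG.preconnected a b
  obtain ⟨d, -, h1, h2⟩ := p.exists_boundary_dart S ha hb
  exact ⟨d.fst, d.snd, h1, h2, d.adj⟩

open Matrix in
theorem psd_shift {V : Type*} [Fintype V] [DecidableEq V] (G : SimpleGraph V) :
    (algebraMap ℝ (Matrix V V ℝ) (specRad G) - adjMat G).PosSemidef := by
  have hB : (algebraMap ℝ (Matrix V V ℝ) (specRad G) - adjMat G).IsHermitian := by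
    refine Matrix.IsHermitian.sub ?_ (adjMat_herm G)
    ext i j
    simp [Matrix.algebraMap_matrix_apply, eq_comm]
  rw [hB.posSemidef_iff_eigenvalues_nonneg]
  intro i
  have h1 := hB.eigenvalues_mem_spectrum_real i
  rw [← spectrum.singleton_sub_eq] at h1
  obtain ⟨a, ha, b, hb, hab⟩ := h1
  have hfin : (spectrum ℝ (adjMat G)).Finite := Matrix.finite_real_spectrum
  have : b ≤ specRad G := le_csSup hfin.bddAbove hb
  rw [Set.mem_singleton_iff] at ha
  simp only [Pi.zero_apply]
  rw [← hab, ha]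
  linarith

open Matrix in
theorem exists_eigvec {V : Type*} [Fintype V] [DecidableEq V] [Nonempty V] (G : SimpleGraph V) :
    ∃ y : V → ℝ, y ≠ 0 ∧ adjMat G *ᵥ y = specRad G • y := by
  have hA := adjMat_herm G
  have hfin : (spectrum ℝ (adjMat G)).Finite := Matrix.finite_real_spectrum
  have hne : (spectrum ℝ (adjMat G)).Nonempty :=
    ⟨_, hA.eigenvalues_mem_spectrum_real (Classical.arbitrary V)⟩
  have hmem : specRad G ∈ spectrum ℝ (adjMat G) := hne.csSup_mem hfin
  rw [hA.spectrum_real_eq_range_eigenvalues] at hmem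
  obtain ⟨i, hi⟩ := hmem
  refine ⟨⇑(hA.eigenvectorBasis i), ?_, ?_⟩
  · intro h
    have := hA.eigenvectorBasis.orthonormal.ne_zero i
    apply this
    ext j
    exact congrFun h j
  · rw [hA.mulVec_eigenvectorBasis i, hi]

open Matrix in
theorem perron {V : Type*} [Fintype V] [DecidableEq V] (G : SimpleGraph V) (hG : G.Connected) :
    ∃ y : V → ℝ, (∀ i, 0 < y i) ∧ adjMat G *ᵥ y = specRad G • y := by
  classical
  have := hG.nonempty
  obtain ⟨y, hy0, hy⟩ := exists_eigvec G
  set z : V → ℝ := fun i => |y i| with hz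
  have hpsd := psd_shift G
  have key : ∀ x : V → ℝ, (algebraMap ℝ (Matrix V V ℝ) (specRad G) - adjMat G) *ᵥ x
      = specRad G • x - adjMat G *ᵥ x := by
    intro x
    rw [Matrix.sub_mulVec, Algebra.algebraMap_eq_smul_one, Matrix.smul_mulVec, Matrix.one_mulVec]
  have hz1 : adjMat G *ᵥ z = specRad G • z := by
    have h0 : star z ⬝ᵥ ((algebraMap ℝ (Matrix V V ℝ) (specRad G) - adjMat G) *ᵥ z) = 0 := by
      apply le_antisymm _ (hpsd.dotProduct_mulVec_nonneg z)
      rw [key, star_trivial, dotProduct_sub, dotProduct_smul]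
      have e1 : z ⬝ᵥ z = y ⬝ᵥ y := by
        simp [dotProduct, hz]
      have e2 : y ⬝ᵥ (adjMat G *ᵥ y) = specRad G • (y ⬝ᵥ y) := by
        rw [hy, dotProduct_smul]
      have e3 : y ⬝ᵥ (adjMat G *ᵥ y) ≤ z ⬝ᵥ (adjMat G *ᵥ z) := by
        simp only [dotProduct, adjMat_mulVec]
        refine Finset.sum_le_sum fun i _ => ?_
        rw [Finset.mul_sum, Finset.mul_sum]
        refine Finset.sum_le_sum fun j _ => ?_
        split_ifs
        · rw [hz, ← abs_mul]; exact le_abs_self _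
        · simp
      rw [e1, ← e2]; linarith
    rw [hpsd.dotProduct_mulVec_zero_iff, key] at h0
    exact (sub_eq_zero.mp h0).symm
  refine ⟨z, ?_, hz1⟩
  by_contra! hcon
  obtain ⟨i, hi⟩ := hcon
  obtain ⟨k, hk⟩ : ∃ k, y k ≠ 0 := by
    by_contra! h; exact hy0 (funext h)
  have hzn : ∀ j, 0 ≤ z j := fun j => abs_nonneg _
  obtain ⟨a, b, ha, hb, hab⟩ := cross_edge hG {j | z j = 0} (a := i) (b := k)
    (le_antisymm hi (hzn i)) (by simpa [hz] using hk)
  have h1 := congrFun hz1 a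
  rw [adjMat_mulVec, Pi.smul_apply, show z a = 0 from ha, smul_zero,
    Finset.sum_eq_zero_iff_of_nonneg (by intro j _; split_ifs; exacts [hzn j, le_rfl])] at h1
  have := h1 b (Finset.mem_univ _)
  rw [if_pos hab] at this
  exact hb this

/-- Lower bound: `A x ≥ μ x` with `x ≥ 0` nonzero gives `ρ ≥ μ`; equality forces `A x = μ x`. -/
theorem specRad_lower {V : Type*} [Fintype V] [DecidableEq V] (G : SimpleGraph V)
    (hG : G.Connected) (x : V → ℝ) (hx : ∀ i, 0 ≤ x i) (i₀ : V) (hi₀ : 0 < x i₀) (μ : ℝ)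
    (h : ∀ i, μ * x i ≤ (adjMat G).mulVec x i) :
    μ ≤ specRad G ∧ (∀ i, μ * x i < (adjMat G).mulVec x i → μ < specRad G) := by
  obtain ⟨y, hy, hyA⟩ := perron G hG
  have hpos : 0 < y ⬝ᵥ x :=
    Finset.sum_pos' (fun i _ => mul_nonneg (hy i).le (hx i))
      ⟨i₀, Finset.mem_univ _, mul_pos (hy i₀) hi₀⟩
  have e : y ⬝ᵥ (adjMat G).mulVec x = specRad G * (y ⬝ᵥ x) := by
    rw [adjMat_symm_dot, hyA, dotProduct_smul, smul_eq_mul, dotProduct_comm]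
  have e2 : μ * (y ⬝ᵥ x) = ∑ i, y i * (μ * x i) := by
    rw [dotProduct, Finset.mul_sum]; exact Finset.sum_congr rfl fun i _ => by ring
  constructor
  · have : μ * (y ⬝ᵥ x) ≤ specRad G * (y ⬝ᵥ x) := by
      rw [← e, e2]
      exact Finset.sum_le_sum fun i _ => mul_le_mul_of_nonneg_left (h i) (hy i).le
    exact le_of_mul_le_mul_right this hpos
  · intro i hi
    have : μ * (y ⬝ᵥ x) < specRad G * (y ⬝ᵥ x) := by
      rw [← e, e2]
      exact Finset.sum_lt_sum (fun i _ => mul_le_mul_of_nonneg_left (h i) (hy i).le)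
        ⟨i, Finset.mem_univ _, mul_lt_mul_of_pos_left hi (hy i)⟩
    exact lt_of_mul_lt_mul_right this hpos.le

/-- Upper bound: `A x ≤ μ x` with `x ≥ 0` nonzero gives `ρ ≤ μ`; strict if `A x ≠ μ x`. -/
theorem specRad_upper {V : Type*} [Fintype V] [DecidableEq V] (G : SimpleGraph V)
    (hG : G.Connected) (x : V → ℝ) (hx : ∀ i, 0 ≤ x i) (i₀ : V) (hi₀ : 0 < x i₀) (μ : ℝ)
    (h : ∀ i, (adjMat G).mulVec x i ≤ μ * x i) :
    specRad G ≤ μ ∧ (∀ i, (adjMat G).mulVec x i < μ * x i → specRad G < μ) := by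
  obtain ⟨y, hy, hyA⟩ := perron G hG
  have hpos : 0 < y ⬝ᵥ x :=
    Finset.sum_pos' (fun i _ => mul_nonneg (hy i).le (hx i))
      ⟨i₀, Finset.mem_univ _, mul_pos (hy i₀) hi₀⟩
  have e : y ⬝ᵥ (adjMat G).mulVec x = specRad G * (y ⬝ᵥ x) := by
    rw [adjMat_symm_dot, hyA, dotProduct_smul, smul_eq_mul, dotProduct_comm]
  have e2 : μ * (y ⬝ᵥ x) = ∑ i, y i * (μ * x i) := by
    rw [dotProduct, Finset.mul_sum]; exact Finset.sum_congr rfl fun i _ => by ring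
  constructor
  · have : specRad G * (y ⬝ᵥ x) ≤ μ * (y ⬝ᵥ x) := by
      rw [← e, e2]
      exact Finset.sum_le_sum fun i _ => mul_le_mul_of_nonneg_left (h i) (hy i).le
    exact le_of_mul_le_mul_right this hpos
  · intro i hi
    have : specRad G * (y ⬝ᵥ x) < μ * (y ⬝ᵥ x) := by
      rw [← e, e2]
      exact Finset.sum_lt_sum (fun i _ => mul_le_mul_of_nonneg_left (h i) (hy i).le)
        ⟨i, Finset.mem_univ _, mul_lt_mul_of_pos_left hi (hy i)⟩
    exact lt_of_mul_lt_mul_right this hpos.le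

/-- Strict monotonicity of the spectral radius. -/
theorem eq_of_le_of_specRad_le {V : Type*} [Fintype V] [DecidableEq V] (H G : SimpleGraph V)
    (hH : H.Connected) (hle : H ≤ G) (hr : specRad G ≤ specRad H) : G = H := by
  classical
  obtain ⟨y, hy, hyA⟩ := perron H hH
  have hG : G.Connected := hH.mono hle
  by_contra hne
  obtain ⟨a, b, hab, hnab⟩ : ∃ a b, G.Adj a b ∧ ¬ H.Adj a b := by
    by_contra! hcon
    exact hne (le_antisymm (fun a b hab => hcon a b hab) hle)
  have hterm : ∀ i j, (if H.Adj i j then y j else 0) ≤ (if G.Adj i j then y j else 0) := by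
    intro i j
    by_cases h : H.Adj i j
    · simp [h, hle h]
    · rw [if_neg h]; split_ifs; exacts [(hy j).le, le_rfl]
  have hval : ∀ i, specRad H * y i = ∑ j, if H.Adj i j then y j else 0 := by
    intro i
    rw [← adjMat_mulVec, hyA]; rfl
  have := (specRad_lower G hG y (fun i => (hy i).le) a (hy a) (specRad H) (by
    intro i
    rw [hval, adjMat_mulVec]
    exact Finset.sum_le_sum fun j _ => hterm i j)).2 a (by
    rw [hval, adjMat_mulVec]
    refine Finset.sum_lt_sum (fun j _ => hterm a j) ⟨b, Finset.mem_univ _, ?_⟩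
    simp [hab, hnab, hy b])
  linarith

theorem specRad_iso {V W : Type*} [Fintype V] [DecidableEq V] [Fintype W] [DecidableEq W]
    (G : SimpleGraph V) (H : SimpleGraph W) (e : G ≃g H) : specRad G = specRad H := by
  have : adjMat H = Matrix.reindexAlgEquiv ℝ ℝ e.toEquiv (adjMat G) := by
    ext i j
    simp only [Matrix.coe_reindexAlgEquiv, Matrix.reindex_apply, Matrix.submatrix_apply, adjMat,
      Matrix.of_apply]
    have h : G.Adj (e.toEquiv.symm i) (e.toEquiv.symm j) ↔ H.Adj i j := e.symm.map_adj_iff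
    by_cases h' : H.Adj i j <;> simp [h, h']
  unfold specRad
  rw [this, AlgEquiv.spectrum_eq]

theorem domNum_two_of {V : Type*} [Fintype V] (G : SimpleGraph V)
    (h0 : Nonempty V) (h1 : ∀ u, ∃ v, v ≠ u ∧ ¬ G.Adj u v)
    (h2 : ∃ u v, u ≠ v ∧ ∀ w, w = u ∨ w = v ∨ G.Adj u w ∨ G.Adj v w) : domNum G = 2 := by
  classical
  unfold domNum
  apply le_antisymm
  · obtain ⟨u, v, huv, h⟩ := h2
    refine Nat.sInf_le ⟨{u, v}, ?_, Finset.card_pair huv⟩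
    intro w hw
    simp only [Finset.mem_insert, Finset.mem_singleton, not_or] at hw
    rcases h w with h | h | h | h
    · exact absurd h hw.1
    · exact absurd h hw.2
    · exact ⟨u, by simp, h⟩
    · exact ⟨v, by simp, h⟩
  · have hne : {k | ∃ D : Finset V, IsDomSet G D ∧ D.card = k}.Nonempty :=
      ⟨_, Finset.univ, fun v hv => absurd (Finset.mem_univ v) hv, rfl⟩
    apply le_csInf hne
    rintro k ⟨D, hD, rfl⟩
    by_contra! hlt
    obtain hc | hc : D.card = 0 ∨ D.card = 1 := by omega
    · rw [Finset.card_eq_zero] at hc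
      subst hc
      obtain ⟨v⟩ := h0
      obtain ⟨u, hu, -⟩ := hD v (by simp)
      simp at hu
    · obtain ⟨u, rfl⟩ := Finset.card_eq_one.mp hc
      obtain ⟨v, hv, hn⟩ := h1 u
      obtain ⟨w, hw, hwv⟩ := hD v (by simpa using hv)
      rw [Finset.mem_singleton] at hw
      subst hw
      exact hn hwv

theorem of_domNum_two {V : Type*} [Fintype V] (G : SimpleGraph V) (h : domNum G = 2) :
    (∀ u, ∃ v, v ≠ u ∧ ¬ G.Adj u v) ∧
    (∃ u v, u ≠ v ∧ ∀ w, w = u ∨ w = v ∨ G.Adj u w ∨ G.Adj v w) := by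
  classical
  constructor
  · intro u
    by_contra! hcon
    have : domNum G ≤ 1 := Nat.sInf_le ⟨{u}, by
      intro v hv
      exact ⟨u, by simp, hcon v (by simpa using hv)⟩, by simp⟩
    omega
  · have hne : {k | ∃ D : Finset V, IsDomSet G D ∧ D.card = k}.Nonempty :=
      ⟨_, Finset.univ, fun v hv => absurd (Finset.mem_univ v) hv, rfl⟩
    obtain ⟨D, hD, hc⟩ := Nat.sInf_mem hne
    have hc2 : D.card = 2 := hc.trans h
    obtain ⟨u, v, huv, rfl⟩ := Finset.card_eq_two.mp hc2
    refine ⟨u, v, huv, fun w => ?_⟩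
    by_cases hw : w ∈ ({u, v} : Finset V)
    · simp only [Finset.mem_insert, Finset.mem_singleton] at hw; tauto
    · obtain ⟨x, hx, hxw⟩ := hD w hw
      simp only [Finset.mem_insert, Finset.mem_singleton] at hx
      rcases hx with rfl | rfl <;> tauto

open Sum in
theorem hg_adj (n : ℕ) : (Hgraph n).Adj (inl 0) (inl 1) ∧ (Hgraph n).Adj (inl 1) (inl 2) ∧
    (Hgraph n).Adj (inl 2) (inl 3) ∧ (∀ j, (Hgraph n).Adj (inl 0) (inr (inl j))) ∧
    (∀ j, (Hgraph n).Adj (inl 3) (inr (inr j))) := by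
  simp [Hgraph, SimpleGraph.fromRel_adj]

open Sum in
theorem hg_conn (n : ℕ) : (Hgraph n).Connected := by
  obtain ⟨h1, h2, h3, h4, h5⟩ := hg_adj n
  have r1 := h1.reachable
  have r2 := r1.trans h2.reachable
  have r3 := r2.trans h3.reachable
  have hr : ∀ x, (Hgraph n).Reachable (inl 0) x := by
    rintro (i | j | j)
    · fin_cases i
      exacts [Reachable.refl _, r1, r2, r3]
    · exact (h4 j).reachable
    · exact r3.trans (h5 j).reachable
  exact { preconnected := fun x y => (hr x).symm.trans (hr y), nonempty := ⟨inl 0⟩ }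

open Sum in
theorem hg_nodom (n : ℕ) : ∀ u, ∃ v, v ≠ u ∧ ¬ (Hgraph n).Adj u v := by
  rintro (i | j | j)
  · fin_cases i
    · exact ⟨inl 3, by simp [Hgraph]⟩
    · exact ⟨inl 3, by simp [Hgraph]⟩
    · exact ⟨inl 0, by simp [Hgraph]⟩
    · exact ⟨inl 0, by simp [Hgraph]⟩
  · exact ⟨inl 3, by simp [Hgraph]⟩
  · exact ⟨inl 0, by simp [Hgraph]⟩

open Sum in
theorem hg_dom (n : ℕ) : ∃ u v, u ≠ v ∧ ∀ w, w = u ∨ w = v ∨ (Hgraph n).Adj u w ∨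
    (Hgraph n).Adj v w := by
  obtain ⟨h1, h2, h3, h4, h5⟩ := hg_adj n
  refine ⟨inl 0, inl 3, by simp, ?_⟩
  rintro (i | j | j)
  · fin_cases i
    · simp
    · simp [h1]
    · simp [h3.symm]
    · simp
  · simp [h4]
  · simp [h5]

open Sum in
theorem hg_mulVec (n : ℕ) (f : Fin 4 ⊕ (Fin (n / 2 - 2) ⊕ Fin ((n + 1) / 2 - 2)) → ℝ) :
    (adjMat (Hgraph n)).mulVec f (inl 0) = f (inl 1) + ∑ j, f (inr (inl j)) ∧
    (adjMat (Hgraph n)).mulVec f (inl 1) = f (inl 0) + f (inl 2) ∧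
    (adjMat (Hgraph n)).mulVec f (inl 2) = f (inl 1) + f (inl 3) ∧
    (adjMat (Hgraph n)).mulVec f (inl 3) = f (inl 2) + ∑ j, f (inr (inr j)) ∧
    (∀ j, (adjMat (Hgraph n)).mulVec f (inr (inl j)) = f (inl 0)) ∧
    (∀ j, (adjMat (Hgraph n)).mulVec f (inr (inr j)) = f (inl 3)) := by
  classical
  refine ⟨?_, ?_, ?_, ?_, ?_, ?_⟩ <;>
  simp [adjMat_mulVec, Hgraph, SimpleGraph.fromRel_adj, Fintype.sum_sum_type, Fin.sum_univ_four]

open Sum in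
/-- Generic upper bound for the spectral radius of `Hgraph n`. -/
theorem hg_upper (n : ℕ) (a b c d l r μ : ℝ) (ha : 0 < a) (hb : 0 ≤ b) (hc : 0 ≤ c) (hd : 0 ≤ d)
    (hl : 0 ≤ l) (hr : 0 ≤ r)
    (h0 : b + ((n / 2 - 2 : ℕ) : ℝ) * l ≤ μ * a) (h1 : a + c ≤ μ * b) (h2 : b + d ≤ μ * c)
    (h3 : c + (((n + 1) / 2 - 2 : ℕ) : ℝ) * r ≤ μ * d) (h4 : a ≤ μ * l) (h5 : d ≤ μ * r) :
    specRad (Hgraph n) ≤ μ ∧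
      (b + ((n / 2 - 2 : ℕ) : ℝ) * l < μ * a → specRad (Hgraph n) < μ) := by
  obtain ⟨e0, e1, e2, e3, e4, e5⟩ := hg_mulVec n
    (Sum.elim ![a, b, c, d] (Sum.elim (fun _ => l) (fun _ => r)))
  have key := specRad_upper (Hgraph n) (hg_conn n)
    (Sum.elim ![a, b, c, d] (Sum.elim (fun _ => l) (fun _ => r))) (by
      rintro (i | j | j)
      · fin_cases i <;> simp [ha.le, hb, hc, hd]
      · simpa using hl
      · simpa using hr) (inl 0) (by simpa using ha) μ (by
      rintro (i | j | j)
      · fin_cases i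
      
        · refine e0.trans_le ?_; simpa using h0
        · refine e1.trans_le ?_; simpa using h1
        · refine e2.trans_le ?_; simpa using h2
        · refine e3.trans_le ?_; simpa using h3
      · rw [e4]; simpa using h4
      · rw [e5]; simpa using h5)
  refine ⟨key.1, fun h => key.2 (inl 0) ?_⟩
  refine e0.trans_lt ?_
  simpa using h

theorem hg_even (m : ℕ) (hm : 4 ≤ m) (μ : ℝ) (hμ : 0 ≤ μ) (hμ2 : μ * μ = m) :
    specRad (Hgraph (2 * m)) ≤ μ := by
  have hm' : (4 : ℝ) ≤ m := by exact_mod_cast hm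
  have h2 : 2 ≤ μ := by nlinarith
  have c1 : ((2 * m / 2 - 2 : ℕ) : ℝ) = m - 2 := by
    rw [show 2 * m / 2 - 2 = m - 2 by omega]; push_cast [show 2 ≤ m by omega]; ring
  have c2 : (((2 * m + 1) / 2 - 2 : ℕ) : ℝ) = m - 2 := by
    rw [show (2 * m + 1) / 2 - 2 = m - 2 by omega]; push_cast [show 2 ≤ m by omega]; ring
  refine (hg_upper (2 * m) μ 2 2 μ 1 1 μ ?_ ?_ ?_ ?_ ?_ ?_ ?_ ?_ ?_ ?_ ?_ ?_).1 <;>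
    (try rw [c1]) <;> (try rw [c2]) <;> linarith

theorem hg_odd (m : ℕ) (hm : 3 ≤ m) (μ : ℝ) (hμ : 0 ≤ μ) (hμ2 : μ * μ = m) :
    specRad (Hgraph (2 * m - 1)) ≤ μ ∧ (4 ≤ m → specRad (Hgraph (2 * m - 1)) < μ) := by
  have hm' : (3 : ℝ) ≤ m := by exact_mod_cast hm
  have h2 : 0 < μ := by
    rcases hμ.eq_or_lt with h | h
    · rw [← h] at hμ2; linarith
    · exact h
  have c1 : (((2 * m - 1) / 2 - 2 : ℕ) : ℝ) = m - 3 := by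
    rw [show (2 * m - 1) / 2 - 2 = m - 3 by omega]; push_cast [hm]; ring
  have c2 : (((2 * m - 1 + 1) / 2 - 2 : ℕ) : ℝ) = m - 2 := by
    rw [show (2 * m - 1 + 1) / 2 - 2 = m - 2 by omega]; push_cast [show 2 ≤ m by omega]; ring
  have e : μ * (μ * (m - 2)) = m * (m - 2) := by rw [← mul_assoc, hμ2]
  have e' : μ * (2 * μ) = 2 * m := by rw [← hμ2]; ring
  have h := hg_upper (2 * m - 1) (μ * (m - 2)) m (2 * μ) m (m - 2) μ μ
    (mul_pos h2 (by linarith)) (by linarith) (by linarith) (by linarith) (by linarith) h2.le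
    (by rw [c1, e]; nlinarith) (by linarith) (by linarith)
    (by rw [c2]; linarith) le_rfl (by linarith)
  refine ⟨h.1, fun h4 => h.2 ?_⟩
  have h4' : (4 : ℝ) ≤ m := by exact_mod_cast h4
  rw [c1, e]; nlinarith

theorem hg_six : specRad (Hgraph 6) ≤ 20 / 11 := by
  refine (hg_upper 6 9 11 11 9 5 5 (20 / 11) ?_ ?_ ?_ ?_ ?_ ?_ ?_ ?_ ?_ ?_ ?_ ?_).1 <;> norm_num

/-- If `G` contains a spanning copy of `Hgraph n` and is minimal, it is `Hgraph n`. -/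
theorem iso_of_copy (n : ℕ) (hn : 4 ≤ n) (G : SimpleGraph (Fin n))
    (hr : specRad G ≤ specRad (Hgraph n)) (a b c d : Fin n) (P Q : Finset (Fin n))
    (hab : G.Adj a b) (hbc : G.Adj b c) (hcd : G.Adj c d)
    (hnac : a ≠ c) (hnad : a ≠ d) (hnbd : b ≠ d)
    (hPQ : Disjoint P Q) (hP : P.card = n / 2 - 2) (hQ : Q.card = (n + 1) / 2 - 2)
    (hPa : ∀ x ∈ P, G.Adj a x ∧ x ≠ b ∧ x ≠ c ∧ x ≠ d)
    (hQd : ∀ x ∈ Q, G.Adj d x ∧ x ≠ a ∧ x ≠ b ∧ x ≠ c) :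
    Nonempty (G ≃g Hgraph n) := by
  classical
  let eP := (P.equivFinOfCardEq hP).symm
  let eQ := (Q.equivFinOfCardEq hQ).symm
  let φ : Fin 4 ⊕ (Fin (n / 2 - 2) ⊕ Fin ((n + 1) / 2 - 2)) → Fin n :=
    Sum.elim ![a, b, c, d] (Sum.elim (fun j => (eP j : Fin n)) (fun j => (eQ j : Fin n)))
  have nab := hab.ne
  have nbc := hbc.ne
  have ncd := hcd.ne
  have inj4 : Function.Injective ![a, b, c, d] := by
    intro i j hij
    fin_cases i <;> fin_cases j <;> simp_all
  have hinj : Function.Injective φ := by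
    refine Function.Injective.sumElim inj4 (Function.Injective.sumElim ?_ ?_ ?_) ?_
    · exact Subtype.val_injective.comp eP.injective
    · exact Subtype.val_injective.comp eQ.injective
    · intro i j h
      exact Finset.disjoint_left.mp hPQ (eP i).2 (h ▸ (eQ j).2)
    · rintro i (j | j)
      · obtain ⟨h1, h2, h3, h4⟩ := hPa _ (eP j).2
        have h0 := h1.ne
        fin_cases i
        exacts [h0, h2.symm, h3.symm, h4.symm]
      · obtain ⟨h1, h2, h3, h4⟩ := hQd _ (eQ j).2
        have h0 := h1.ne
        fin_cases i
        exacts [h2.symm, h3.symm, h4.symm, h0]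
  have hbij : Function.Bijective φ := by
    rw [Fintype.bijective_iff_injective_and_card]
    refine ⟨hinj, ?_⟩
    simp only [Fintype.card_sum, Fintype.card_fin]
    omega
  let e := Equiv.ofBijective φ hbij
  let H' : SimpleGraph (Fin n) := (Hgraph n).map e.toEmbedding
  let iso : Hgraph n ≃g H' := SimpleGraph.Iso.map e (Hgraph n)
  have hle : H' ≤ G := by
    rw [SimpleGraph.map_le_iff_le_comap]
    have hrel : ∀ x y, ((x = Sum.inl 0 ∧ y = Sum.inl 1) ∨
      (x = Sum.inl 1 ∧ y = Sum.inl 2) ∨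
      (x = Sum.inl 2 ∧ y = Sum.inl 3) ∨
      (∃ j : Fin (n / 2 - 2), x = Sum.inl 0 ∧ y = Sum.inr (Sum.inl j)) ∨
      (∃ j : Fin ((n + 1) / 2 - 2), x = Sum.inl 3 ∧ y = Sum.inr (Sum.inr j))) →
      G.Adj (φ x) (φ y) := by
      rintro x y (⟨rfl, rfl⟩ | ⟨rfl, rfl⟩ | ⟨rfl, rfl⟩ | ⟨j, rfl, rfl⟩ | ⟨j, rfl, rfl⟩)
      · exact hab
      · exact hbc
      · exact hcd
      · exact (hPa _ (eP j).2).1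
      · exact (hQd _ (eQ j).2).1
    intro x y hxy
    rw [Hgraph, SimpleGraph.fromRel_adj] at hxy
    rcases hxy.2 with h | h
    · exact hrel x y h
    · exact (hrel y x h).symm
  have hconn : H'.Connected := iso.connected_iff.mp (hg_conn n)
  have heq := eq_of_le_of_specRad_le H' G hconn hle
    (by rw [← specRad_iso _ _ iso]; exact hr)
  rw [heq]
  exact ⟨iso.symm⟩

/-- The minimal graph has spectral radius at most that of `Hgraph n`. -/
theorem min_le (n : ℕ) (hn : 4 ≤ n) (G : SimpleGraph (Fin n))
    (hmin : ∀ H : SimpleGraph (Fin n), H.Connected → domNum H = 2 →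
      specRad G ≤ specRad H) : specRad G ≤ specRad (Hgraph n) := by
  have hcard : Fintype.card (Fin 4 ⊕ (Fin (n / 2 - 2) ⊕ Fin ((n + 1) / 2 - 2))) =
      Fintype.card (Fin n) := by
    simp only [Fintype.card_sum, Fintype.card_fin]
    omega
  let e := Fintype.equivOfCardEq hcard
  let H' : SimpleGraph (Fin n) := (Hgraph n).map e.toEmbedding
  let iso : Hgraph n ≃g H' := SimpleGraph.Iso.map e (Hgraph n)
  rw [specRad_iso _ _ iso]
  refine hmin H' (iso.connected_iff.mp (hg_conn n)) (domNum_two_of _ ⟨⟨0, by omega⟩⟩ ?_ ?_)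
  · intro u
    obtain ⟨v, h1, h2⟩ := hg_nodom n (iso.symm u)
    refine ⟨iso v, ?_, ?_⟩
    · rintro rfl; simp at h1
    · intro h
      apply h2
      rw [← iso.map_adj_iff]
      simpa using h
  · obtain ⟨u, v, huv, h⟩ := hg_dom n
    refine ⟨iso u, iso v, by simpa using huv, fun w => ?_⟩
    have := h (iso.symm w)
    rw [← iso.map_adj_iff, ← iso.map_adj_iff] at this
    simp only [RelIso.apply_symm_apply] at this
    rcases this with h | h | h | h
    · left; rw [← h]; simp
    · right; left; rw [← h]; simp
    · tauto
    · tauto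

theorem sum_le_mulVec {V : Type*} [Fintype V] (G : SimpleGraph V) (f : V → ℝ)
    (hf : ∀ i, 0 ≤ f i) (i : V) (S : Finset V) (hS : ∀ j ∈ S, G.Adj i j) :
    ∑ j ∈ S, f j ≤ (adjMat G).mulVec f i := by
  classical
  rw [adjMat_mulVec]
  calc ∑ j ∈ S, f j = ∑ j ∈ S, (if G.Adj i j then f j else 0) :=
        Finset.sum_congr rfl fun j hj => by rw [if_pos (hS j hj)]
    _ ≤ _ := Finset.sum_le_sum_of_subset_of_nonneg (Finset.subset_univ _)
        fun j _ _ => by split_ifs; exacts [hf j, le_rfl]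

/-- A large degree together with a non-dominated vertex makes the spectral radius large. -/
theorem big_deg {V : Type*} [Fintype V] [DecidableEq V] (G : SimpleGraph V) [DecidableRel G.Adj]
    (hG : G.Connected) (x : V) (hx : ∃ v, v ≠ x ∧ ¬ G.Adj x v) (m : ℕ) (hm : m ≤ G.degree x)
    (μ : ℝ) (hμ : 0 < μ) (hμ2 : μ * μ = m) : μ < specRad G := by
  obtain ⟨v, hvx, hv⟩ := hx
  obtain ⟨y, z, hy, hz, hyz⟩ := cross_edge hG {w | w = x ∨ G.Adj x w} (a := x) (b := v)
    (by simp) (by simp [hvx, hv])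
  simp only [Set.mem_ofPred_eq, not_or] at hy hz
  have hxy : G.Adj x y := by
    rcases hy with rfl | h
    · exact absurd hyz hz.2
    · exact h
  set f : V → ℝ := fun w => if w = x then μ else if G.Adj x w then 1 else 0 with hf
  have hf0 : ∀ w, 0 ≤ f w := by
    intro w; simp only [hf]; split_ifs <;> linarith
  have hfx : f x = μ := by simp [hf]
  have hfn : ∀ w, G.Adj x w → f w = 1 := by
    intro w hw; simp [hf, hw, hw.ne']
  have hfz : f z = 0 := by simp [hf, hz]
  have hL : ∀ i, μ * f i ≤ (adjMat G).mulVec f i := by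
    intro i
    by_cases h1 : i = x
    · subst h1
      have := sum_le_mulVec G f hf0 i (G.neighborFinset i) (by simp)
      rw [Finset.sum_congr rfl (fun j hj => hfn j (by simpa using hj))] at this
      simp only [Finset.sum_const, SimpleGraph.card_neighborFinset_eq_degree, nsmul_eq_mul,
        mul_one] at this
      rw [hfx, hμ2]
      have : (m : ℝ) ≤ G.degree i := by exact_mod_cast hm
      linarith
    by_cases h2 : G.Adj x i
    · have := sum_le_mulVec G f hf0 i {x} (by simpa using h2.symm)
      rw [Finset.sum_singleton, hfx] at this
      rw [hfn i h2]; linarith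
    · have := sum_le_mulVec G f hf0 i ∅ (by simp)
      simp only [Finset.sum_empty] at this
      have h0 : f i = 0 := by simp [hf, h1, h2]
      rw [h0]; linarith
  refine (specRad_lower G hG f hf0 x (by rw [hfx]; exact hμ) μ hL).2 z ?_
  have := sum_le_mulVec G f hf0 z {y} (by simpa using hyz.symm)
  rw [Finset.sum_singleton, hfn y hxy] at this
  rw [hfz]; linarith

/-- Degree three and a vertex at distance two. -/
theorem deg_three {V : Type*} [Fintype V] [DecidableEq V] (G : SimpleGraph V)
    (hG : G.Connected) (x y z s t : V) (hxy : G.Adj x y) (hyz : G.Adj y z) (hxs : G.Adj x s)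
    (hxt : G.Adj x t) (hzx : z ≠ x) (hxz : ¬ G.Adj x z) (hys : y ≠ s) (hyt : y ≠ t) (hst : s ≠ t) :
    20 / 11 < specRad G := by
  have hzs : z ≠ s := by rintro rfl; exact hxz hxs
  have hzt : z ≠ t := by rintro rfl; exact hxz hxt
  have hxy' := hxy.ne'
  have hyz' := hyz.ne'
  have hxs' := hxs.ne'
  have hxt' := hxt.ne'
  set f : V → ℝ := fun w => if w = x then 20 else if w = y then 15 else if w = z then 8 else
    if w = s then 11 else if w = t then 11 else 0 with hf
  have fx : f x = 20 := by simp [hf]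
  have fy : f y = 15 := by simp [hf, hxy']
  have fz : f z = 8 := by simp [hf, hzx, hyz']
  have fs : f s = 11 := by simp [hf, hxs', hys.symm, hzs.symm]
  have ft : f t = 11 := by simp [hf, hxt', hyt.symm, hzt.symm]
  have hf0 : ∀ w, 0 ≤ f w := by
    intro w; simp only [hf]; split_ifs <;> norm_num
  have bx : 37 ≤ (adjMat G).mulVec f x := by
    have := sum_le_mulVec G f hf0 x {y, s, t} (by simp [hxy, hxs, hxt])
    rw [Finset.sum_insert (by simp [hys, hyt]), Finset.sum_pair hst, fy, fs, ft] at this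
    linarith
  have b_y : 28 ≤ (adjMat G).mulVec f y := by
    have := sum_le_mulVec G f hf0 y {x, z} (by simp [hxy.symm, hyz])
    rw [Finset.sum_pair hzx.symm, fx, fz] at this
    linarith
  have bz : 15 ≤ (adjMat G).mulVec f z := by
    have := sum_le_mulVec G f hf0 z {y} (by simp [hyz.symm])
    rw [Finset.sum_singleton, fy] at this
    linarith
  have bs : 20 ≤ (adjMat G).mulVec f s := by
    have := sum_le_mulVec G f hf0 s {x} (by simp [hxs.symm])
    rw [Finset.sum_singleton, fx] at this
    linarith
  have bt : 20 ≤ (adjMat G).mulVec f t := by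
    have := sum_le_mulVec G f hf0 t {x} (by simp [hxt.symm])
    rw [Finset.sum_singleton, fx] at this
    linarith
  refine (specRad_lower G hG f hf0 x (by rw [fx]; norm_num) (20 / 11) ?_).2 x ?_
  · intro i
    by_cases h1 : i = x
    · rw [h1, fx]; linarith
    by_cases h2 : i = y
    · rw [h2, fy]; linarith
    by_cases h3 : i = z
    · rw [h3, fz]; linarith
    by_cases h4 : i = s
    · rw [h4, fs]; linarith
    by_cases h5 : i = t
    · rw [h5, ft]; linarith
    have := sum_le_mulVec G f hf0 i ∅ (by simp)
    simp only [Finset.sum_empty] at this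
    have h0 : f i = 0 := by simp [hf, h1, h2, h3, h4, h5]
    rw [h0]; linarith
  · rw [fx]; linarith

/-- Two vertices of degree `m - 1` sharing a neighbour. -/
theorem overlap_lower {V : Type*} [Fintype V] [DecidableEq V] (G : SimpleGraph V)
    [DecidableRel G.Adj]
    (hG : G.Connected) (u v w : V) (huv : u ≠ v) (hnuv : ¬ G.Adj u v)
    (huw : G.Adj u w) (hvw : G.Adj v w) (m : ℕ)
    (hu : G.degree u + 1 = m) (hv : G.degree v + 1 = m)
    (μ : ℝ) (hμ : 0 < μ) (hμ2 : μ * μ = m) : μ ≤ specRad G := by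
  set f : V → ℝ := fun i => (if i = u then μ else 0) + (if i = v then μ else 0) +
    (if G.Adj u i then 1 else 0) + (if G.Adj v i then 1 else 0) with hf
  have hf0 : ∀ i, 0 ≤ f i := by
    intro i; simp only [hf]; split_ifs <;> linarith
  have hnvu : ¬ G.Adj v u := fun h => hnuv h.symm
  have fu : f u = μ := by simp [hf, huv, hnvu]
  have fv : f v = μ := by simp [hf, huv.symm, hnuv]
  have fw : f w = 2 := by simp [hf, huw, hvw, huw.ne', hvw.ne']; norm_num
  have deg_bound : ∀ x, G.Adj x w → (∀ j, G.Adj x j → 1 ≤ f j) → G.degree x + 1 = m →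
      (m : ℝ) ≤ (adjMat G).mulVec f x := by
    intro x hxw hj hd
    refine le_trans ?_ (sum_le_mulVec G f hf0 x (G.neighborFinset x) (by simp))
    have hw : w ∈ G.neighborFinset x := by simpa using hxw
    rw [← Finset.add_sum_erase _ _ hw, fw]
    have h1 : ((G.neighborFinset x).erase w).card • (1 : ℝ) ≤
        ∑ j ∈ (G.neighborFinset x).erase w, f j :=
      Finset.card_nsmul_le_sum _ _ _ fun j h => hj j (by
        simpa using (Finset.mem_erase.mp h).2)
    have h2 : ((G.neighborFinset x).erase w).card + 2 = m := by
      rw [Finset.card_erase_of_mem hw, SimpleGraph.card_neighborFinset_eq_degree]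
      have : 0 < G.degree x := by
        rw [← SimpleGraph.card_neighborFinset_eq_degree]; exact Finset.card_pos.mpr ⟨w, hw⟩
      omega
    rw [nsmul_eq_mul, mul_one] at h1
    have h3 : (m : ℝ) = ((G.neighborFinset x).erase w).card + 2 := by rw [← h2]; push_cast; ring
    linarith
  refine (specRad_lower G hG f hf0 u (by rw [fu]; exact hμ) μ ?_).1
  intro i
  by_cases h1 : i = u
  · rw [h1, fu, hμ2]
    refine deg_bound u huw (fun j hj => ?_) hu
    simp only [hf, if_pos hj]
    split_ifs <;> linarith
  by_cases h2 : i = v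
  · rw [h2, fv, hμ2]
    refine deg_bound v hvw (fun j hj => ?_) hv
    simp only [hf, if_pos hj]
    split_ifs <;> linarith
  by_cases h3 : G.Adj u i <;> by_cases h4 : G.Adj v i
  · have := sum_le_mulVec G f hf0 i {u, v} (by simp [h3.symm, h4.symm])
    rw [Finset.sum_pair huv, fu, fv] at this
    have h0 : f i = 2 := by simp [hf, h1, h2, h3, h4]; norm_num
    rw [h0]; linarith
  · have := sum_le_mulVec G f hf0 i {u} (by simp [h3.symm])
    rw [Finset.sum_singleton, fu] at this
    have h0 : f i = 1 := by simp [hf, h1, h2, h3, h4]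
    rw [h0]; linarith
  · have := sum_le_mulVec G f hf0 i {v} (by simp [h4.symm])
    rw [Finset.sum_singleton, fv] at this
    have h0 : f i = 1 := by simp [hf, h1, h2, h3, h4]
    rw [h0]; linarith
  · have := sum_le_mulVec G f hf0 i ∅ (by simp)
    simp only [Finset.sum_empty] at this
    have h0 : f i = 0 := by simp [hf, h1, h2, h3, h4]
    rw [h0]; linarith

/-- The disjoint case. -/
theorem disjoint_case (n : ℕ) (hn : 4 ≤ n) (G : SimpleGraph (Fin n)) [DecidableRel G.Adj]
    (hconn : G.Connected) (hr : specRad G ≤ specRad (Hgraph n)) (u v : Fin n)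
    (hcov : ∀ w, w = u ∨ w = v ∨ G.Adj u w ∨ G.Adj v w)
    (hdisj : Disjoint (insert u (G.neighborFinset u)) (insert v (G.neighborFinset v)))
    (hu : G.degree u + 1 = n / 2) (hv : G.degree v + 1 = (n + 1) / 2) :
    Nonempty (G ≃g Hgraph n) := by
  have hd : ∀ w, (w = u ∨ G.Adj u w) → (w = v ∨ G.Adj v w) → False := by
    intro w h1 h2
    exact (Finset.disjoint_left.mp hdisj) (show w ∈ _ by simpa using h1) (by simpa using h2)
  obtain ⟨b, c, hb, hc, hbc⟩ := cross_edge hconn {w | w = u ∨ G.Adj u w} (a := u) (b := v)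
    (by simp) (fun h => hd v h (Or.inl rfl))
  simp only [Set.mem_ofPred_eq, not_or] at hb hc
  have hub : G.Adj u b := by
    rcases hb with rfl | h
    · exact absurd hbc hc.2
    · exact h
  have hvc' : c = v ∨ G.Adj v c := by
    have := hcov c; tauto
  have hvc : G.Adj v c := by
    rcases hvc' with rfl | h
    · exact (hd b (Or.inr hub) (Or.inr hbc.symm)).elim
    · exact h
  have bu : b ∈ G.neighborFinset u := by simpa using hub
  have cv : c ∈ G.neighborFinset v := by simpa using hvc
  refine iso_of_copy n hn G hr u b c v ((G.neighborFinset u).erase b)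
    ((G.neighborFinset v).erase c) hub hbc hvc.symm (Ne.symm hc.1) ?_ ?_ ?_ ?_ ?_ ?_ ?_
  · rintro rfl; exact hd u (Or.inl rfl) (Or.inl rfl)
  · rintro rfl; exact hd b (Or.inr hub) (Or.inl rfl)
  · rw [Finset.disjoint_left]
    intro w h1 h2
    exact hd w (Or.inr (by simpa using (Finset.mem_erase.mp h1).2))
      (Or.inr (by simpa using (Finset.mem_erase.mp h2).2))
  · rw [Finset.card_erase_of_mem bu, SimpleGraph.card_neighborFinset_eq_degree]; omega
  · rw [Finset.card_erase_of_mem cv, SimpleGraph.card_neighborFinset_eq_degree]; omega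
  · intro x hx
    obtain ⟨hxb, hx⟩ := Finset.mem_erase.mp hx
    have hux : G.Adj u x := by simpa using hx
    refine ⟨hux, hxb, ?_, ?_⟩
    · rintro rfl; exact hc.2 hux
    · rintro rfl; exact hd x (Or.inr hux) (Or.inl rfl)
  · intro x hx
    obtain ⟨hxc, hx⟩ := Finset.mem_erase.mp hx
    have hvx : G.Adj v x := by simpa using hx
    refine ⟨hvx, ?_, ?_, hxc⟩
    · rintro rfl; exact hd x (Or.inl rfl) (Or.inr hvx)
    · rintro rfl; exact hd x (Or.inr hub) (Or.inr hvx)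

theorem minimizer_domNum_two (n : ℕ) (hn : 4 ≤ n)
    (G : SimpleGraph (Fin n)) (hconn : G.Connected) (hdom : domNum G = 2)
    (hmin : ∀ H : SimpleGraph (Fin n), H.Connected → domNum H = 2 →
      specRad G ≤ specRad H) :
    Nonempty (G ≃g Hgraph n) := by
  classical
  have hr := min_le n hn G hmin
  obtain ⟨hnd, u, v, huv, hcov⟩ := of_domNum_two G hdom
  obtain ⟨μ, hμ, hμ2⟩ : ∃ μ : ℝ, 0 < μ ∧ μ * μ = ((n + 1) / 2 : ℕ) := by
    have h : (0 : ℝ) < ((n + 1) / 2 : ℕ) := by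
      exact_mod_cast (show 0 < (n + 1) / 2 by omega)
    exact ⟨Real.sqrt _, Real.sqrt_pos.mpr h, Real.mul_self_sqrt h.le⟩
  by_cases hbig : ∃ x, (n + 1) / 2 ≤ G.degree x
  · -- a vertex of large degree
    obtain ⟨x, hx⟩ := hbig
    by_cases h46 : n = 4 ∨ n = 6
    · obtain ⟨v, hvx, hv⟩ := hnd x
      obtain ⟨y, z, hy, hz, hyz⟩ := cross_edge hconn {w | w = x ∨ G.Adj x w} (a := x) (b := v)
        (by simp) (by simp [hvx, hv])
      simp only [Set.mem_ofPred_eq, not_or] at hy hz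
      have hxy : G.Adj x y := by
        rcases hy with rfl | h
        · exact absurd hyz hz.2
        · exact h
      have yx : y ∈ G.neighborFinset x := by simpa using hxy
      have hcard : ((G.neighborFinset x).erase y).card + 1 = G.degree x := by
        rw [← SimpleGraph.card_neighborFinset_eq_degree]
        exact Finset.card_erase_add_one yx
      rcases h46 with rfl | rfl
      · obtain ⟨s, hs⟩ : ((G.neighborFinset x).erase y).Nonempty := by
          rw [← Finset.card_pos]; omega
        simp only [Finset.mem_erase, SimpleGraph.mem_neighborFinset] at hs
        refine iso_of_copy 4 hn G hr z y x s ∅ ∅ hyz.symm hxy.symm hs.2 hz.1 ?_ hs.1.symm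
          (by simp) (by simp) (by simp) (by simp) (by simp)
        rintro rfl; exact hz.2 hs.2
      · exfalso
        obtain ⟨s, hs, t, ht, hst⟩ := Finset.one_lt_card.mp
          (show 1 < ((G.neighborFinset x).erase y).card by omega)
        simp only [Finset.mem_erase, SimpleGraph.mem_neighborFinset] at hs ht
        have := deg_three G hconn x y z s t hxy hyz hs.2 ht.2 hz.1 hz.2 hs.1.symm ht.1.symm hst
        have := hg_six
        linarith
    · exfalso
      have h1 := big_deg G hconn x (hnd x) _ hx μ hμ hμ2
      have h2 : specRad (Hgraph n) ≤ μ := by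
        rcases Nat.even_or_odd' n with ⟨m, rfl | rfl⟩
        · refine hg_even m (by omega) μ hμ.le ?_
          rw [hμ2]; congr 1; omega
        · exact (hg_odd (m + 1) (by omega) μ hμ.le (by rw [hμ2]; congr 1; omega)).1
      linarith
  · push Not at hbig
    have bu := hbig u
    have bv := hbig v
    have cu : (insert u (G.neighborFinset u)).card = G.degree u + 1 := by
      rw [Finset.card_insert_of_notMem (by simp), SimpleGraph.card_neighborFinset_eq_degree]
    have cv : (insert v (G.neighborFinset v)).card = G.degree v + 1 := by
      rw [Finset.card_insert_of_notMem (by simp), SimpleGraph.card_neighborFinset_eq_degree]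
    have hun : insert u (G.neighborFinset u) ∪ insert v (G.neighborFinset v) = Finset.univ := by
      ext w
      have := hcov w
      simp only [Finset.mem_union, Finset.mem_insert, SimpleGraph.mem_neighborFinset,
        Finset.mem_univ, iff_true]
      tauto
    have hc := Finset.card_union_add_card_inter (insert u (G.neighborFinset u))
      (insert v (G.neighborFinset v))
    rw [hun, cu, cv, Finset.card_univ, Fintype.card_fin] at hc
    by_cases hdisj : Disjoint (insert u (G.neighborFinset u)) (insert v (G.neighborFinset v))
    · rw [Finset.disjoint_iff_inter_eq_empty.mp hdisj, Finset.card_empty] at hc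
      rcases le_total (G.degree u) (G.degree v) with hle | hle
      · exact disjoint_case n hn G hconn hr u v hcov hdisj (by omega) (by omega)
      · exact disjoint_case n hn G hconn hr v u (fun w => by have := hcov w; tauto) hdisj.symm
          (by omega) (by omega)
    · have hpos : 0 < (insert u (G.neighborFinset u) ∩ insert v (G.neighborFinset v)).card := by
        rw [Finset.card_pos, Finset.nonempty_iff_ne_empty]
        exact fun h => hdisj (Finset.disjoint_iff_inter_eq_empty.mpr h)
      have hone : (insert u (G.neighborFinset u) ∩ insert v (G.neighborFinset v)).card = 1 := by
        omega
      obtain ⟨w, hw⟩ := Finset.card_eq_one.mp hone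
      have hmem : ∀ x, (x = u ∨ G.Adj u x) → (x = v ∨ G.Adj v x) → x = w := by
        intro x h1 h2
        rw [← Finset.mem_singleton, ← hw]
        simpa using ⟨h1, h2⟩
      have hww : (w = u ∨ G.Adj u w) ∧ (w = v ∨ G.Adj v w) := by
        have : w ∈ insert u (G.neighborFinset u) ∩ insert v (G.neighborFinset v) := by
          rw [hw]; simp
        simpa using this
      have hnuv : ¬ G.Adj u v := by
        intro h
        exact huv ((hmem u (Or.inl rfl) (Or.inr h.symm)).trans
          (hmem v (Or.inr h) (Or.inl rfl)).symm)
      have huw : G.Adj u w := by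
        rcases hww.1 with h | h
        · subst h
          rcases hww.2 with h | h
          · exact absurd h huv
          · exact absurd h.symm hnuv
        · exact h
      have hvw : G.Adj v w := by
        rcases hww.2 with h | h
        · subst h; exact absurd huw hnuv
        · exact h
      have hdu : G.degree u + 1 = (n + 1) / 2 := by omega
      have hdv : G.degree v + 1 = (n + 1) / 2 := by omega
      obtain ⟨m, hm⟩ : ∃ m, n = 2 * m - 1 ∧ 3 ≤ m := ⟨(n + 1) / 2, by omega, by omega⟩
      by_cases h5 : n = 5
      · subst h5
        have wu : w ∈ G.neighborFinset u := by simpa using huw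
        have wv : w ∈ G.neighborFinset v := by simpa using hvw
        have c1 := Finset.card_erase_add_one wu
        have c2 := Finset.card_erase_add_one wv
        rw [SimpleGraph.card_neighborFinset_eq_degree] at c1 c2
        obtain ⟨a, ha⟩ : ((G.neighborFinset u).erase w).Nonempty := by
          rw [← Finset.card_pos]; omega
        simp only [Finset.mem_erase, SimpleGraph.mem_neighborFinset] at ha
        refine iso_of_copy 5 hn G hr a u w v ∅ ((G.neighborFinset v).erase w) ha.2.symm huw
          hvw.symm ha.1 ?_ huv (by simp) (by simp) (by omega) (by simp) ?_
        · rintro rfl; exact hnuv ha.2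
        · intro x hx
          simp only [Finset.mem_erase, SimpleGraph.mem_neighborFinset] at hx
          refine ⟨hx.2, ?_, ?_, hx.1⟩
          · rintro rfl; exact hx.1 (hmem x (Or.inr ha.2) (Or.inr hx.2))
          · rintro rfl; exact hnuv hx.2.symm
      · exfalso
        have h1 := overlap_lower G hconn u v w huv hnuv huw hvw _ hdu hdv μ hμ hμ2
        obtain ⟨rfl, hm3⟩ := hm
        have h2 := (hg_odd m hm3 μ hμ.le (by rw [hμ2]; congr 1; omega)).2 (by omega)
        linarith
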